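/- Let d ≥ 2 be an integer, let γ be a d-core with γ_1 > 0 and length m, set γ' = (γ_2, γ_3, …), and let y ∈ {0,…,d−1} be the unique index with b_y(γ) = b_y(γ') + 1. Then γ_1 = d(b_y(γ) − 1) + y + 1 − m. -/

import Mathlib

/-!
The bead set `B = B_m(γ)` of a `d`-core is closed under `b ↦ b - d` for `b ≥ d`
(`beads_sub_mem`): if `b ∈ B` is the bead of row `r` and `b - d ∉ B`, then row `r` contains a cell
of hook length `d`, in the column determined by the number of beads exceeding `b - d`
(`hook_eq` computes the hook length). Hence on each runner the beads are stacked without gaps.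

Since every part `γ_i` with `i ≤ m` is positive, `0 ∉ B`, so runner `0` is empty and `b_y(γ)` is
just the number of beads on runner `y`; the same holds for `γ'`, as
`B_m(γ) = B_{m-1}(γ') ∪ {γ_1 + m - 1}`. The hypothesis on `y` therefore says that the largest bead
`γ_1 + m - 1` lies on runner `y`. Writing it as `y + d * q`, runner `y` consists of exactly the
positions `y + d * k` with `k ≤ q`, so `b_y(γ) = q + 1`, which is the claimed formula.
-/

/-!
Partitions are encoded as functions `γ : ℕ → ℕ` with 1-based indexing:
`γ i` is the `i`-th part for `i ≥ 1` (the value `γ 0` is irrelevant).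
-/

/-- The set of cells of the Young diagram of `γ` (1-based): the pair `(i, j)`
(cell in row `j`, column `i`) is a cell when `1 ≤ j` and `1 ≤ i ≤ γ j`. -/
def cells (γ : ℕ → ℕ) : Set (ℕ × ℕ) :=
  {c | 1 ≤ c.2 ∧ 1 ≤ c.1 ∧ c.1 ≤ γ c.2}

/-- The hook length of `γ` at a cell `c = (i, j)`. -/
noncomputable def hook (γ : ℕ → ℕ) (c : ℕ × ℕ) : ℕ :=
  Set.ncard {c' | c' ∈ cells γ ∧ c.1 ≤ c'.1 ∧ c.2 ≤ c'.2 ∧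
    (c'.1 - c.1) * (c'.2 - c.2) = 0}

/-- `γ` is a partition of length `m`. -/
def IsPartitionOfLength (γ : ℕ → ℕ) (m : ℕ) : Prop :=
  (∀ i, 1 ≤ i → γ (i + 1) ≤ γ i) ∧ (∀ i, 1 ≤ i → (γ i ≠ 0 ↔ i ≤ m))

/-- `γ` is a `d`-core: no cell of its Young diagram has hook length `d`. -/
def IsDCore (d : ℕ) (γ : ℕ → ℕ) : Prop :=
  ∀ c ∈ cells γ, hook γ c ≠ d

/-- The `N`-bead set `B_N(γ) = {γ_i + N - i : 1 ≤ i ≤ N}`. -/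
def beads (γ : ℕ → ℕ) (N : ℕ) : Set ℕ :=
  {b | ∃ i, 1 ≤ i ∧ i ≤ N ∧ b = γ i + (N - i)}

/-- `n_j(γ; N)`: the number of beads of `B_N(γ)` congruent to `j` mod `d`. -/
noncomputable def runnerCount (d : ℕ) (γ : ℕ → ℕ) (N j : ℕ) : ℕ :=
  Set.ncard {b | b ∈ beads γ N ∧ b % d = j}

/-- `b_j(γ) = n_j(γ) - n_0(γ)`, computed with the canonical choice `N = m`
(the length of `γ`), which satisfies `N ≥ m` and `N ≡ m (mod d)`. -/
noncomputable def bRunner (d : ℕ) (γ : ℕ → ℕ) (m j : ℕ) : ℤ :=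
  (runnerCount d γ m j : ℤ) - (runnerCount d γ m 0 : ℤ)

/-- The partition `γ' = (γ_2, γ_3, …)` obtained by deleting the first part. -/
def shift (γ : ℕ → ℕ) : ℕ → ℕ := fun i => γ (i + 1)

lemma part_antitone {γ : ℕ → ℕ} {m : ℕ} (hγ : IsPartitionOfLength γ m) {i j : ℕ}
    (hi : 1 ≤ i) (hij : i ≤ j) : γ j ≤ γ i := by
  induction j, hij using Nat.le_induction with
  | base => exact le_rfl
  | succ k hk ih => exact (hγ.1 k (hi.trans hk)).trans ih

/-- Hook length as arm plus leg plus one, where `s` is the last row meeting column `i`. -/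
lemma hook_eq {γ : ℕ → ℕ} {m : ℕ} (hγ : IsPartitionOfLength γ m) {i r s : ℕ}
    (hr : 1 ≤ r) (hrs : r ≤ s) (hi : 1 ≤ i) (his : i ≤ γ s) (hs : γ (s + 1) < i) :
    hook γ (i, r) = (γ r - i) + (s - r) + 1 := by
  have hir : i ≤ γ r := his.trans (part_antitone hγ hr hrs)
  have key : {c' | c' ∈ cells γ ∧ (i, r).1 ≤ c'.1 ∧ (i, r).2 ≤ c'.2 ∧
      (c'.1 - (i, r).1) * (c'.2 - (i, r).2) = 0} =
      ((Finset.Icc i (γ r) ×ˢ {r} ∪ {i} ×ˢ Finset.Icc (r + 1) s : Finset (ℕ × ℕ)) :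
        Set (ℕ × ℕ)) := by
    ext ⟨a, b⟩
    simp only [cells, Set.mem_ofPred_eq, Finset.coe_union, Set.mem_union, Finset.mem_coe,
      Finset.mem_product, Finset.mem_Icc, Finset.mem_singleton, Nat.mul_eq_zero]
    constructor
    · rintro ⟨⟨h1, h2, h3⟩, h4, h5, h6⟩
      by_cases hb : b = r
      · subst hb; left; omega
      · right
        have ha : a = i := by omega
        subst ha
        refine ⟨rfl, by omega, ?_⟩
        by_contra hlt
        have := part_antitone hγ (i := s + 1) (j := b) (by omega) (by omega)
        omega
    · rintro (⟨⟨h1, h2⟩, rfl⟩ | ⟨rfl, h1, h2⟩)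
      · omega
      · have := part_antitone hγ (i := b) (j := s) (by omega) h2
        omega
  have hdisj : Disjoint (Finset.Icc i (γ r) ×ˢ {r} : Finset (ℕ × ℕ))
      ({i} ×ˢ Finset.Icc (r + 1) s) := by
    rw [Finset.disjoint_left]
    rintro ⟨a, b⟩
    simp only [Finset.mem_product, Finset.mem_Icc, Finset.mem_singleton]
    omega
  rw [hook, key, Set.ncard_coe_finset, Finset.card_union_of_disjoint hdisj]
  simp only [Finset.card_product, Nat.card_Icc, Finset.card_singleton]
  omega

/-- Beads of a `d`-core can always be pushed down one step on their runner. -/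
lemma beads_sub_mem {d : ℕ} {γ : ℕ → ℕ} {m : ℕ} (hd : 1 ≤ d)
    (hγ : IsPartitionOfLength γ m) (hcore : IsDCore d γ) {a : ℕ}
    (h : a + d ∈ beads γ m) : a ∈ beads γ m := by
  by_contra ha
  obtain ⟨r, hr, hrm, hbr⟩ := h
  -- `s` is the number of beads exceeding `a`.
  set s := Nat.findGreatest (fun j => a < γ j + (m - j)) m with hsdef
  have hrs : r ≤ s := Nat.le_findGreatest hrm (by omega)
  have hsm : s ≤ m := Nat.findGreatest_le m
  have hPs : a < γ s + (m - s) :=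
    Nat.findGreatest_spec (P := fun j => a < γ j + (m - j)) hrm (by omega)
  -- The cell of hook length `d` lies in column `a + s + 1 - m`.
  have hnext : m ≤ a + s ∧ γ (s + 1) < a + s + 1 - m := by
    rcases hsm.eq_or_lt with hsm' | hsm'
    · have := hγ.2 (s + 1) (by omega)
      have h0 : γ (s + 1) = 0 := by
        by_contra hne
        have := this.1 hne
        omega
      omega
    · have h1 : ¬ a < γ (s + 1) + (m - (s + 1)) :=
        Nat.findGreatest_is_greatest (P := fun j => a < γ j + (m - j))
          (Nat.lt_succ_self s) hsm'
      have h2 : a ≠ γ (s + 1) + (m - (s + 1)) := fun h =>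
        ha ⟨s + 1, by omega, hsm', h⟩
      omega
  have hhook := hook_eq hγ hr hrs (i := a + s + 1 - m) (by omega) (by omega) hnext.2
  have hant := part_antitone hγ hr hrs
  refine hcore (a + s + 1 - m, r) ⟨hr, ?_, ?_⟩ ?_
  · change 1 ≤ a + s + 1 - m
    omega
  · change a + s + 1 - m ≤ γ r
    omega
  · rw [hhook]
    omega

lemma beads_sub_mul_mem {d : ℕ} {γ : ℕ → ℕ} {m : ℕ} (hd : 1 ≤ d)
    (hγ : IsPartitionOfLength γ m) (hcore : IsDCore d γ) {a : ℕ} (k : ℕ)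
    (h : a + d * k ∈ beads γ m) : a ∈ beads γ m := by
  induction k with
  | zero => simpa using h
  | succ k ih => exact ih (beads_sub_mem hd hγ hcore (by rwa [mul_add_one, ← add_assoc] at h))

lemma beads_eq_insert {γ : ℕ → ℕ} {m : ℕ} (hm : 1 ≤ m) :
    beads γ m = insert (γ 1 + (m - 1)) (beads (shift γ) (m - 1)) := by
  ext b
  simp only [beads, shift, Set.mem_ofPred_eq, Set.mem_insert_iff]
  constructor
  · rintro ⟨i, h1, h2, rfl⟩
    rcases h1.eq_or_lt with rfl | h1
    · exact Or.inl rfl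
    · right
      refine ⟨i - 1, by omega, by omega, ?_⟩
      rw [Nat.sub_add_cancel (by omega)]
      omega
  · rintro (rfl | ⟨i, h1, h2, rfl⟩)
    · exact ⟨1, le_rfl, hm, rfl⟩
    · exact ⟨i + 1, by omega, by omega, by omega⟩

/-- Position `0` is empty, hence so is the whole runner `0`. -/
lemma beads_mod_ne_zero {d : ℕ} {γ : ℕ → ℕ} {m : ℕ} (hd : 1 ≤ d)
    (hγ : IsPartitionOfLength γ m) (hcore : IsDCore d γ) {b : ℕ}
    (hb : b ∈ beads γ m) : b % d ≠ 0 := by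
  intro h0
  obtain ⟨k, rfl⟩ := Nat.dvd_of_mod_eq_zero h0
  obtain ⟨i, h1, h2, h3⟩ := beads_sub_mul_mem hd hγ hcore (a := 0) k (by simpa using hb)
  have := (hγ.2 i h1).2 h2
  omega

/-- if `γ` is a `d`-core with `γ_1 > 0` and length `m`,
`γ' = (γ_2, γ_3, …)`, and `y ∈ {0,…,d-1}` is the (unique) index with
`b_y(γ) = b_y(γ') + 1`, then `γ_1 = d(b_y(γ) - 1) + y + 1 - m`. -/
theorem gamma_one_eq (d : ℕ) (hd : 2 ≤ d) (γ : ℕ → ℕ) (m : ℕ)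
    (hγ : IsPartitionOfLength γ m) (hcore : IsDCore d γ) (hpos : 0 < γ 1)
    (y : ℕ) (hy : y < d)
    (hby : bRunner d γ m y = bRunner d (shift γ) (m - 1) y + 1) :
    (γ 1 : ℤ) = (d : ℤ) * (bRunner d γ m y - 1) + y + 1 - m := by
  have hd1 : 1 ≤ d := by omega
  have hm : 1 ≤ m := (hγ.2 1 le_rfl).1 hpos.ne'
  have hins := beads_eq_insert (γ := γ) hm
  have hz : runnerCount d γ m 0 = 0 := by
    have : {b | b ∈ beads γ m ∧ b % d = 0} = ∅ :=
      Set.eq_empty_of_forall_notMem fun b hb => beads_mod_ne_zero hd1 hγ hcore hb.1 hb.2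
    rw [runnerCount, this, Set.ncard_empty]
  have hz' : runnerCount d (shift γ) (m - 1) 0 = 0 := by
    have : {b | b ∈ beads (shift γ) (m - 1) ∧ b % d = 0} = ∅ :=
      Set.eq_empty_of_forall_notMem fun b hb =>
        beads_mod_ne_zero hd1 hγ hcore (hins ▸ Set.mem_insert_of_mem _ hb.1) hb.2
    rw [runnerCount, this, Set.ncard_empty]
  have htop : (γ 1 + (m - 1)) % d = y := by
    by_contra hne
    have : runnerCount d γ m y = runnerCount d (shift γ) (m - 1) y := by
      unfold runnerCount
      congr 1
      ext b
      rw [hins]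
      simp only [Set.mem_ofPred_eq, Set.mem_insert_iff]
      constructor
      · rintro ⟨rfl | h, h'⟩
        · exact absurd h' hne
        · exact ⟨h, h'⟩
      · exact fun h => ⟨Or.inr h.1, h.2⟩
    simp only [bRunner, hz, hz', this] at hby
    omega
  obtain ⟨q, hq⟩ : ∃ q, γ 1 + (m - 1) = y + d * q :=
    ⟨(γ 1 + (m - 1)) / d, by rw [← htop, Nat.mod_add_div]⟩
  have hset : {b | b ∈ beads γ m ∧ b % d = y} =
      (((Finset.range (q + 1)).image fun k => y + d * k : Finset ℕ) : Set ℕ) := by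
    ext b
    simp only [Set.mem_ofPred_eq, Finset.coe_image, Set.mem_image, Finset.mem_coe,
      Finset.mem_range]
    constructor
    · rintro ⟨⟨i, h1, h2, h3⟩, hb⟩
      have hle : b ≤ y + d * q := by
        have := part_antitone hγ le_rfl h1
        omega
      have hbd : y + d * (b / d) = b := by rw [← hb, Nat.mod_add_div]
      refine ⟨b / d, ?_, hbd⟩
      have : d * (b / d) ≤ d * q := by omega
      exact Nat.lt_succ_of_le (Nat.le_of_mul_le_mul_left this hd1)
    · rintro ⟨k, hk, rfl⟩
      refine ⟨beads_sub_mul_mem hd1 hγ hcore (q - k) ?_, ?_⟩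
      · rw [add_assoc, ← mul_add, Nat.add_sub_cancel' (by omega), ← hq]
        exact ⟨1, le_rfl, hm, rfl⟩
      · rw [Nat.add_mul_mod_self_left, Nat.mod_eq_of_lt hy]
  have hcount : runnerCount d γ m y = q + 1 := by
    rw [runnerCount, hset, Set.ncard_coe_finset, Finset.card_image_of_injective,
      Finset.card_range]
    intro k l hkl
    exact Nat.eq_of_mul_eq_mul_left hd1 (Nat.add_left_cancel hkl)
  rw [bRunner, hz, hcount]
  push_cast
  have hq' : (γ 1 : ℤ) + (m - 1) = y + d * q := by
    have := congrArg (Nat.cast : ℕ → ℤ) hq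
    push_cast [hm] at this
    exact this
  linear_combination hq'
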